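/- Let $n \ge 1$, let $x_0 \in \mathbb{R}^n$ be an initial opinion vector and let $x_f \in \mathbb{R}^n$ be a desired final opinion vector satisfying $x_{fi} \neq 0$ for all $i$ and the constraint $\sum_{i=1}^n \frac{x_{0i}}{x_{fi}} = n$. Fix any $k \neq 0$ and define $p_i = k / x_{fi}$ and $P = \mathrm{diag}(p_1,\dots,p_n)$. Then $P$ is invertible and $\frac{1}{n} P^{-1} \mathbb{1}_n \mathbb{1}_n^T P\, x_0 = x_f$; equivalently, $p_i x_{fi} = \frac{1}{n}\sum_{j=1}^n p_j x_{0j} = k$ for every $i$. -/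

import Mathlib

/-!
The constraint gives `∑ j, (k / xf j) * x₀ j = k * ∑ j, x₀ j / xf j = k * n`, so the average of
`P x₀` is `k`. Hence `(1/n) J P x₀` is the constant vector `k`, and `P⁻¹ = diagonal (xf i / k)`
sends it to `xf`.
-/

/-- Design of the coordinate change realizing desired final opinion states: given
initial opinions `x₀` and desired final opinions `x_f` with `x_f i ≠ 0` for all `i`
and satisfying the compatibility constraint `∑ i, x₀ i / x_f i = n`, the diagonal
matrix `P = diagonal p` with `p i = k / x_f i` (for any fixed `k ≠ 0`) is invertible
and realizes `x_f` as the final state: `(1/n) P⁻¹ J P x₀ = x_f` (with `J` the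
all-ones matrix); equivalently `p i * x_f i = (1/n) ∑ j, p j * x₀ j = k` for all
`i`. -/
theorem design_diagonal_P (n : ℕ) (hn : 1 ≤ n) (x₀ xf : Fin n → ℝ)
    (hxf : ∀ i, xf i ≠ 0) (hconstraint : ∑ i, x₀ i / xf i = n)
    (k : ℝ) (hk : k ≠ 0) :
    (Matrix.diagonal (fun i => k / xf i)).det ≠ 0 ∧
    (((n : ℝ)⁻¹) • ((Matrix.diagonal (fun i => k / xf i))⁻¹ *
        (Matrix.of fun _ _ => (1 : ℝ)) *
        (Matrix.diagonal (fun i => k / xf i)))).mulVec x₀ = xf ∧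
    (∀ i, (k / xf i) * xf i = k) ∧
    ((n : ℝ)⁻¹ * ∑ j, (k / xf j) * x₀ j = k) := by
  have hn0 : (n : ℝ) ≠ 0 := by exact_mod_cast (by omega : n ≠ 0)
  have hmean : (n : ℝ)⁻¹ * ∑ j, (k / xf j) * x₀ j = k := by
    have hsum : ∑ j, (k / xf j) * x₀ j = k * n := by
      rw [← hconstraint, Finset.mul_sum]
      exact Finset.sum_congr rfl fun j _ => by ring
    rw [hsum]
    field_simp
  have hinv : (Matrix.diagonal fun i => k / xf i)⁻¹ = Matrix.diagonal fun i => xf i / k := by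
    apply Matrix.inv_eq_right_inv
    rw [Matrix.diagonal_mul_diagonal, ← Matrix.diagonal_one]
    congr 1
    funext i
    have := hxf i
    field_simp
  refine ⟨?_, ?_, fun i => div_mul_cancel₀ k (hxf i), hmean⟩
  · rw [Matrix.det_diagonal]
    exact Finset.prod_ne_zero_iff.mpr fun i _ => div_ne_zero hk (hxf i)
  · funext i
    have hrow : ((Matrix.of fun _ _ => (1 : ℝ)) : Matrix (Fin n) (Fin n) ℝ).mulVec
        ((Matrix.diagonal fun i => k / xf i).mulVec x₀) i = ∑ j, (k / xf j) * x₀ j := by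
      simp [Matrix.mulVec, dotProduct, Matrix.diagonal_apply]
    rw [hinv, Matrix.smul_mulVec, ← Matrix.mulVec_mulVec, ← Matrix.mulVec_mulVec,
      Pi.smul_apply, Matrix.mulVec_diagonal, hrow, smul_eq_mul, mul_left_comm, hmean]
    exact div_mul_cancel₀ (xf i) hk
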